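/- arXiv:1808.06182 — 2 statements merged into one kernel-verified Lean document; each statement's English description precedes it below -/
import Mathlib

section
/- There exists a constant K > 1 such that the following holds. Let G be a C₄-free graph on n vertices with minimum degree at least d − 1. Then the number of ways to add a new vertex of degree d to G so that the resulting graph is C₄-free (equivalently, the number of d-element vertex subsets W of G such that no two distinct vertices of W have a common neighbour in G) is at most 2^{K·n^{1/2}}. -/
open scoped Classical

/-- A graph is `C₄`-free if it contains no cycle of length 4. -/
def C4Free {V : Type*} (G : SimpleGraph V) : Prop :=
  ¬ ∃ a b c d : V, a ≠ b ∧ a ≠ c ∧ a ≠ d ∧ b ≠ c ∧ b ≠ d ∧ c ≠ d ∧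
    G.Adj a b ∧ G.Adj b c ∧ G.Adj c d ∧ G.Adj d a

/-!
The sets to be counted are the independent `d`-sets of the graph `H` joining two vertices with a
common neighbour in `G`. Put `D = d - 1`, `L = log (n + 1)`.

If `D * L ≤ √n`, then already the number of all `d`-sets is at most `(n + 1) ^ d = exp (O(√n))`.

Otherwise, count with the independence polynomial of `H`. As `G` is `C₄`-free, distinct vertices of
`G` contribute disjoint families of edges to `H`, so by Cauchy-Schwarz every vertex set `A` with
`#A > 2 * n / D` has a vertex joined in `H` to a proportion `β = D ^ 2 / (2 * n)` of `A`. Branch on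
whether that vertex is taken: a branch takes only about `L / β` vertices before at most `2 * n / D`
candidates are left, on which the polynomial at `x = D / √n` is at most
`exp (x * (2 * n / D)) = exp (2 * √n)`. Hence there are at most
`(n + 1) ^ (L / β) * exp (2 * √n) * (√n / D) ^ d` independent `d`-sets, and
`L ^ 2 / β ≤ 2 * L ^ 4 = O(√n)`.
-/

open Finset Real

section Estimates

lemma pow_succ_add_pow_le_add_one_pow {a b : ℝ} (hb : 0 ≤ b) (hba : b ≤ a) (q : ℕ) :
    a ^ (q + 1) + b ^ q ≤ (a + 1) ^ (q + 1) := by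
  have ha : 0 ≤ a := hb.trans hba
  calc a ^ (q + 1) + b ^ q ≤ a ^ (q + 1) + a ^ q := by gcongr
    _ = a ^ q * (a + 1) := by ring
    _ ≤ (a + 1) ^ q * (a + 1) := by gcongr; linarith
    _ = (a + 1) ^ (q + 1) := (pow_succ _ _).symm

lemma mul_one_sub_pow_ceil_le_one {y β : ℝ} (hy : 0 < y) (hβ₀ : 0 < β) (hβ₁ : β ≤ 1) :
    y * (1 - β) ^ ⌈log y / β⌉₊ ≤ 1 := by
  set q := ⌈log y / β⌉₊
  have hq : log y ≤ q * β := (div_le_iff₀ hβ₀).1 (Nat.le_ceil _)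
  calc y * (1 - β) ^ q ≤ exp (log y) * exp (-β) ^ q := by
        rw [exp_log hy]
        have : 0 ≤ 1 - β := by linarith
        gcongr
        exact one_sub_le_exp_neg β
    _ = exp (log y - q * β) := by rw [← exp_nat_mul, ← exp_add]; ring_nf
    _ ≤ 1 := exp_le_one_iff.2 (by linarith)

lemma div_pow_succ_le_exp {s : ℝ} (hs : 0 ≤ s) {D : ℕ} (hD : 1 ≤ D) :
    (s / D) ^ (D + 1) ≤ exp (2 * s) := by
  have hD' : (1 : ℝ) ≤ D := by exact_mod_cast hD
  calc (s / D) ^ (D + 1) ≤ exp (s / D) ^ (D + 1) := by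
        gcongr
        linarith [add_one_le_exp (s / D)]
    _ = exp ((D + 1) * (s / D)) := by rw [← exp_nat_mul, Nat.cast_succ]
    _ ≤ exp (2 * s) := by
        rw [exp_le_exp, ← mul_div_assoc, div_le_iff₀ (by positivity)]
        nlinarith

lemma log_one_add_pow_four_le {t : ℝ} (ht : 0 ≤ t) : log (1 + t) ^ 4 ≤ 24 * t := by
  have hlog : 0 ≤ log (1 + t) := log_nonneg (by linarith)
  have h_taylor : 1 + log (1 + t) ^ 4 / 24 ≤ 1 + t :=
    calc 1 + log (1 + t) ^ 4 / 24 ≤ ∑ i ∈ range 5, log (1 + t) ^ i / i.factorial := by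
          have h_terms : 0 ≤ log (1 + t) + log (1 + t) ^ 2 / 2 + log (1 + t) ^ 3 / 6 := by
            positivity
          norm_num [sum_range_succ, Nat.factorial]
          linarith
      _ ≤ exp (log (1 + t)) := sum_le_exp_of_nonneg hlog 5
      _ = 1 + t := exp_log (by linarith)
  linarith

lemma log_add_one_le_two_mul_log_one_add_sqrt {y : ℝ} (hy : 0 ≤ y) :
    log (y + 1) ≤ 2 * log (1 + √y) := by
  rw [← log_rpow (by positivity), rpow_two]
  gcongr
  nlinarith [sq_sqrt hy, sqrt_nonneg y]

lemma log_add_one_le_two_mul_sqrt {y : ℝ} (hy : 0 ≤ y) : log (y + 1) ≤ 2 * √y := by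
  have := log_le_sub_one_of_pos (show 0 < 1 + √y by positivity)
  linarith [log_add_one_le_two_mul_log_one_add_sqrt hy]

lemma log_add_one_pow_four_le_sqrt {y : ℝ} (hy : 0 ≤ y) : log (y + 1) ^ 4 ≤ 384 * √y :=
  calc log (y + 1) ^ 4 ≤ (2 * log (1 + √y)) ^ 4 := by
        gcongr
        · exact log_nonneg (by linarith)
        · exact log_add_one_le_two_mul_log_one_add_sqrt hy
    _ = 16 * log (1 + √y) ^ 4 := by ring
    _ ≤ 384 * √y := by linarith [log_one_add_pow_four_le (sqrt_nonneg y)]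

end Estimates

section IndependencePolynomial

variable {V : Type*} (H : SimpleGraph V)

/-- The independence polynomial of the subgraph of `H` induced by the finite set `A`, evaluated
at `x`. -/
noncomputable def indepPoly {R : Type*} [CommSemiring R] (A : Finset V) (x : R) : R :=
  ∑ W ∈ A.powerset with H.IsIndepSet (W : Finset V), x ^ #W

lemma indepPoly_insert {R : Type*} [CommSemiring R] {A : Finset V} {v : V} (hv : v ∉ A) (x : R) :
    indepPoly H (insert v A) x =
      indepPoly H A x + x * indepPoly H {u ∈ A | ¬ H.Adj v u} x := by
  have isIndepSet_insert_iff : ∀ W : Finset V, W ⊆ A →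
      (H.IsIndepSet (insert v W : Finset V) ↔
        H.IsIndepSet (W : Set V) ∧ ∀ u ∈ W, ¬ H.Adj v u) := by
    intro W hW
    have : Std.Symm fun a b => ¬ H.Adj a b := ⟨fun _ _ => mt SimpleGraph.Adj.symm⟩
    rw [coe_insert, SimpleGraph.IsIndepSet, Set.pairwise_insert_of_symm]
    exact and_congr_right fun _ => forall₂_congr fun u hu =>
      imp_iff_right (ne_of_mem_of_not_mem (hW hu) hv).symm
  have filter_insert_eq : {W ∈ A.powerset | H.IsIndepSet (insert v W : Finset V)} =
      {W ∈ ({u ∈ A | ¬ H.Adj v u} : Finset V).powerset | H.IsIndepSet (W : Finset V)} := by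
    ext W
    simp only [mem_filter, mem_powerset, subset_iff]
    have := isIndepSet_insert_iff W
    grind
  simp only [indepPoly]
  rw [sum_filter, sum_powerset_insert hv, ← sum_filter, ← sum_filter, filter_insert_eq, mul_sum]
  congr 1
  refine sum_congr rfl fun W hW => ?_
  have hvW : v ∉ W := fun h =>
    hv (mem_of_mem_filter v (mem_powerset.1 (mem_of_mem_filter W hW) h))
  rw [card_insert_of_notMem hvW, pow_succ']

variable {x : ℝ}

lemma indepPoly_nonneg (hx : 0 ≤ x) (A : Finset V) : 0 ≤ indepPoly H A x :=
  sum_nonneg fun _ _ => pow_nonneg hx _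

lemma indepPoly_le_exp (hx : 0 ≤ x) (A : Finset V) : indepPoly H A x ≤ exp (x * #A) :=
  calc indepPoly H A x ≤ ∑ W ∈ A.powerset, x ^ #W :=
        sum_le_sum_of_subset_of_nonneg (filter_subset _ _) fun _ _ _ => pow_nonneg hx _
    _ = (x + 1) ^ #A := by simp only [← sum_pow_mul_eq_add_pow, one_pow, mul_one]
    _ ≤ exp x ^ #A := by gcongr; exact add_one_le_exp x
    _ = exp (x * #A) := by rw [← exp_nat_mul, mul_comm]

lemma card_indepSetFinset_mul_pow_le_indepPoly [Fintype V] [DecidableEq V] (hx : 0 ≤ x)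
    (d : ℕ) :
    #(H.indepSetFinset d) * x ^ d ≤ indepPoly H univ x := by
  calc (#(H.indepSetFinset d) : ℝ) * x ^ d = ∑ W ∈ H.indepSetFinset d, x ^ #W := by
        rw [← nsmul_eq_mul, ← sum_const]
        exact sum_congr rfl fun W hW => by
          rw [(SimpleGraph.mem_indepSetFinset_iff.1 hW).card_eq]
    _ ≤ indepPoly H univ x := by
        refine sum_le_sum_of_subset_of_nonneg (fun W hW => ?_) fun _ _ _ => pow_nonneg hx _
        simp only [mem_filter, mem_powerset, subset_univ, true_and]
        exact (SimpleGraph.mem_indepSetFinset_iff.1 hW).isIndepSet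

variable {H}

lemma card_filter_not_adj_erase_le {A : Finset V} {v : V} {β : ℝ}
    (hdeg : β * #A ≤ #{u ∈ A | H.Adj v u}) :
    (#{u ∈ A.erase v | ¬ H.Adj v u} : ℝ) ≤ #A * (1 - β) := by
  have h_erase : (#{u ∈ A.erase v | ¬ H.Adj v u} : ℝ) ≤ #{u ∈ A | ¬ H.Adj v u} := by
    gcongr
    exact erase_subset v A
  have h_split : (#{u ∈ A | H.Adj v u} : ℝ) + #{u ∈ A | ¬ H.Adj v u} = #A := by
    exact_mod_cast card_filter_add_card_filter_not (s := A) (H.Adj v)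
  linarith

-- Here `q` bounds the number of high-degree vertices that a branch of the recursion takes.
lemma indepPoly_le_of_exists_degree_ge {β r : ℝ} (hx₀ : 0 ≤ x) (hx₁ : x ≤ 1)
    (hdeg : ∀ A : Finset V, r < #A → ∃ v ∈ A, β * #A ≤ #{u ∈ A | H.Adj v u})
    (A : Finset V) (q : ℕ) (hq : #A * (1 - β) ^ q ≤ r) :
    indepPoly H A x ≤ (#A + 1) ^ q * exp (x * r) := by
  induction A using Finset.strongInduction generalizing q with
  | H A ih =>
  rcases le_or_gt (#A : ℝ) r with hsmall | hlarge
  · calc indepPoly H A x ≤ exp (x * #A) := indepPoly_le_exp H hx₀ A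
      _ ≤ exp (x * r) := by gcongr
      _ ≤ (#A + 1) ^ q * exp (x * r) :=
        le_mul_of_one_le_left (exp_nonneg _) (one_le_pow₀ (by simp))
  obtain ⟨v, hv, hdv⟩ := hdeg A hlarge
  obtain _ | q := q
  · rw [pow_zero, mul_one] at hq
    exact absurd hq hlarge.not_ge
  set B := A.erase v
  set C : Finset V := {u ∈ B | ¬ H.Adj v u}
  have hAB : (#A : ℝ) = #B + 1 := by exact_mod_cast (card_erase_add_one hv).symm
  have hCB : (#C : ℝ) ≤ #B := by exact_mod_cast card_filter_le _ _
  have hCA : (#C : ℝ) ≤ #A * (1 - β) := card_filter_not_adj_erase_le hdv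
  have hβ : 0 ≤ 1 - β :=
    nonneg_of_mul_nonneg_right ((Nat.cast_nonneg _).trans hCA) (by rw [hAB]; positivity)
  have hBA : B ⊂ A := erase_ssubset hv
  have hB : indepPoly H B x ≤ (#B + 1) ^ (q + 1) * exp (x * r) := by
    refine ih B hBA (q + 1) (le_trans ?_ hq)
    gcongr
  have hC : indepPoly H C x ≤ (#C + 1) ^ q * exp (x * r) := by
    refine ih C ((filter_subset _ _).trans_ssubset hBA) q (le_trans ?_ hq)
    rw [pow_succ', ← mul_assoc]
    gcongr
  calc indepPoly H A x = indepPoly H B x + x * indepPoly H C x := by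
        rw [← indepPoly_insert H (notMem_erase v A), insert_erase hv]
    _ ≤ indepPoly H B x + indepPoly H C x := by
        gcongr
        exact mul_le_of_le_one_left (indepPoly_nonneg H hx₀ C) hx₁
    _ ≤ ((#B + 1) ^ (q + 1) + (#C + 1) ^ q) * exp (x * r) := by rw [add_mul]; gcongr
    _ ≤ (#A + 1) ^ (q + 1) * exp (x * r) := by
        rw [hAB]
        gcongr
        exact pow_succ_add_pow_le_add_one_pow (by positivity) (by gcongr) q

end IndependencePolynomial

section CommonNeighborGraph

variable {V : Type*} {G : SimpleGraph V}

/-- The graph joining two distinct vertices that have a common neighbour in `G`. Adding to a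
`C₄`-free graph `G` a vertex with neighbourhood `W` leaves it `C₄`-free iff `W` is independent in
this graph. -/
def commonNeighborGraph (G : SimpleGraph V) : SimpleGraph V where
  Adj a b := a ≠ b ∧ ∃ c, G.Adj a c ∧ G.Adj b c
  symm := ⟨fun _ _ ⟨hab, c, hac, hbc⟩ => ⟨hab.symm, c, hbc, hac⟩⟩
  loopless := ⟨fun _ h => h.1 rfl⟩

lemma isIndepSet_commonNeighborGraph_iff {W : Set V} :
    (commonNeighborGraph G).IsIndepSet W ↔
      ∀ a ∈ W, ∀ b ∈ W, a ≠ b → ∀ c, ¬ (G.Adj a c ∧ G.Adj b c) := by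
  simp only [SimpleGraph.IsIndepSet, Set.Pairwise, commonNeighborGraph]
  grind

lemma C4Free.eq_of_adj (hG : C4Free G) {a b c c' : V} (hab : a ≠ b)
    (hac : G.Adj a c) (hbc : G.Adj b c) (hac' : G.Adj a c') (hbc' : G.Adj b c') : c = c' := by
  by_contra hcc'
  exact hG ⟨a, c, b, c', hac.ne, hab, hac'.ne, hbc.ne', hcc', hbc'.ne,
    hac, hbc.symm, hbc', hac'.symm⟩

lemma card_mul_le_card_of_isIndepSet_commonNeighborGraph [Fintype V] {W : Finset V} {D : ℕ}
    (hW : (commonNeighborGraph G).IsIndepSet (W : Set V)) (hdeg : ∀ v ∈ W, D ≤ G.degree v) :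
    #W * D ≤ Fintype.card V := by
  rw [isIndepSet_commonNeighborGraph_iff] at hW
  have h_above : ∀ v ∈ W, D ≤ #(univ.bipartiteAbove G.Adj v) := fun v hv => by
    simpa only [bipartiteAbove, ← G.neighborFinset_eq_filter, G.card_neighborFinset_eq_degree]
      using hdeg v hv
  have h_below : ∀ c ∈ univ, #(W.bipartiteBelow G.Adj c) ≤ 1 := fun c _ => by
    refine card_le_one.2 fun a ha b hb => by_contra fun hab => ?_
    rw [mem_bipartiteBelow] at ha hb
    exact hW a ha.1 b hb.1 hab c ⟨ha.2, hb.2⟩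
  simpa using card_mul_le_card_mul G.Adj h_above h_below

lemma card_mul_le_sum_card_filter_adj [Fintype V] {A : Finset V} {D : ℕ}
    (hdeg : ∀ v ∈ A, D ≤ G.degree v) : #A * D ≤ ∑ c, #{v ∈ A | G.Adj v c} :=
  calc #A * D ≤ ∑ v ∈ A, G.degree v := card_nsmul_le_sum A _ D hdeg
    _ = ∑ v ∈ A, #(univ.bipartiteAbove G.Adj v) := by
        simp only [bipartiteAbove, ← G.neighborFinset_eq_filter, G.card_neighborFinset_eq_degree]
    _ = ∑ c, #{v ∈ A | G.Adj v c} := sum_card_bipartiteAbove_eq_sum_card_bipartiteBelow G.Adj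

lemma C4Free.sum_card_offDiag_le [Fintype V] (hG : C4Free G) (A : Finset V) :
    ∑ c, #({v ∈ A | G.Adj v c} : Finset V).offDiag ≤
      ∑ v ∈ A, #{u ∈ A | (commonNeighborGraph G).Adj v u} := by
  have h_disjoint : ((univ : Finset V) : Set V).PairwiseDisjoint
      fun c => ({v ∈ A | G.Adj v c} : Finset V).offDiag := by
    refine fun c _ c' _ hcc' => disjoint_left.2 fun p hp hp' => hcc' ?_
    simp only [mem_offDiag, mem_filter] at hp hp'
    exact hG.eq_of_adj hp.2.2 hp.1.2 hp.2.1.2 hp'.1.2 hp'.2.1.2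
  rw [← card_biUnion h_disjoint, ← card_sigma]
  refine card_le_card_of_injOn (fun p => ⟨p.1, p.2⟩) (fun p hp => ?_)
    fun p _ p' _ hpp' => by simpa [Prod.ext_iff] using hpp'
  simp only [coe_biUnion, Set.mem_iUnion, mem_coe, mem_offDiag, mem_filter] at hp
  obtain ⟨c, -, ⟨h₁A, h₁c⟩, ⟨h₂A, h₂c⟩, hne⟩ := hp
  simp only [mem_coe, mem_sigma, mem_filter]
  exact ⟨h₁A, h₂A, hne, c, h₁c, h₂c⟩

lemma sq_sum_card_le_two_mul_card_mul_sum_card_offDiag {ι α : Type*} [Fintype ι]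
    (B : ι → Finset α) (hB : 2 * Fintype.card ι ≤ ∑ i, #(B i)) :
    (∑ i, #(B i)) ^ 2 ≤ 2 * Fintype.card ι * ∑ i, #(B i).offDiag := by
  have h_cauchy : (∑ i, #(B i)) ^ 2 ≤ Fintype.card ι * ∑ i, #(B i) ^ 2 :=
    sq_sum_le_card_mul_sum_sq
  have h_offDiag : ∑ i, #(B i) ^ 2 = ∑ i, #(B i).offDiag + ∑ i, #(B i) := by
    rw [← sum_add_distrib]
    refine sum_congr rfl fun i _ => ?_
    rw [offDiag_card, sq, Nat.sub_add_cancel (Nat.le_mul_self _)]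
  rw [h_offDiag] at h_cauchy
  nlinarith

lemma C4Free.exists_sq_mul_card_le_card_filter_adj [Fintype V] (hG : C4Free G) {A : Finset V}
    {D : ℕ} (hdeg : ∀ v ∈ A, D ≤ G.degree v) (hA : 2 * Fintype.card V < #A * D) :
    ∃ v ∈ A, D ^ 2 * #A ≤ 2 * Fintype.card V * #{u ∈ A | (commonNeighborGraph G).Adj v u} := by
  have h_incidences := card_mul_le_sum_card_filter_adj hdeg
  have hA_nonempty : A.Nonempty := card_pos.1 (Nat.pos_of_mul_pos_right (by omega : 0 < #A * D))
  refine exists_le_of_sum_le hA_nonempty ?_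
  calc ∑ _v ∈ A, D ^ 2 * #A = (#A * D) ^ 2 := by rw [sum_const, smul_eq_mul]; ring
    _ ≤ (∑ c, #{v ∈ A | G.Adj v c}) ^ 2 := by gcongr
    _ ≤ 2 * Fintype.card V * ∑ c, #({v ∈ A | G.Adj v c} : Finset V).offDiag :=
        sq_sum_card_le_two_mul_card_mul_sum_card_offDiag _ (hA.le.trans h_incidences)
    _ ≤ 2 * Fintype.card V * ∑ v ∈ A, #{u ∈ A | (commonNeighborGraph G).Adj v u} := by
        gcongr
        exact hG.sum_card_offDiag_le A
    _ = ∑ v ∈ A, 2 * Fintype.card V * #{u ∈ A | (commonNeighborGraph G).Adj v u} :=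
        mul_sum _ _ _

lemma C4Free.exists_div_mul_card_le_card_filter_adj [Fintype V] (hG : C4Free G) {A : Finset V}
    {D : ℕ} (hD : 1 ≤ D) (hdeg : ∀ v ∈ A, D ≤ G.degree v)
    (hA : 2 * Fintype.card V / D < (#A : ℝ)) :
    ∃ v ∈ A, (D ^ 2 / (2 * Fintype.card V) * #A : ℝ) ≤
      #{u ∈ A | (commonNeighborGraph G).Adj v u} := by
  have hD' : (0 : ℝ) < D := by exact_mod_cast hD
  rw [div_lt_iff₀ hD'] at hA
  obtain ⟨v, hv, hdv⟩ := hG.exists_sq_mul_card_le_card_filter_adj hdeg (by exact_mod_cast hA)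
  have hV : 0 < Fintype.card V := Fintype.card_pos_iff.2 ⟨v⟩
  refine ⟨v, hv, ?_⟩
  rw [div_mul_eq_mul_div, div_le_iff₀' (by positivity)]
  exact_mod_cast hdv

end CommonNeighborGraph

section Counting

variable {V : Type*} [Fintype V] [DecidableEq V]

lemma card_indepSetFinset_le_exp_mul_log (H : SimpleGraph V) (d : ℕ) :
    (#(H.indepSetFinset d) : ℝ) ≤ exp (d * log (Fintype.card V + 1)) := by
  have h_subset : H.indepSetFinset d ⊆ univ.powersetCard d := fun W hW =>
    mem_powersetCard.2 ⟨subset_univ W, (SimpleGraph.mem_indepSetFinset_iff.1 hW).card_eq⟩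
  have h_card : #(H.indepSetFinset d) ≤ Fintype.card V ^ d :=
    calc #(H.indepSetFinset d) ≤ (Fintype.card V).choose d := by
          simpa using card_le_card h_subset
      _ ≤ Fintype.card V ^ d := Nat.choose_le_pow _ _
  rw [exp_nat_mul, exp_log (by positivity)]
  calc (#(H.indepSetFinset d) : ℝ) ≤ (Fintype.card V : ℝ) ^ d := by exact_mod_cast h_card
    _ ≤ (Fintype.card V + 1) ^ d := by gcongr; linarith

lemma card_indepSetFinset_le_of_exists_degree_ge {H : SimpleGraph V} {x β r : ℝ}
    (hx₀ : 0 < x) (hx₁ : x ≤ 1) (hβ₀ : 0 < β) (hβ₁ : β ≤ 1) (hr : 1 ≤ r)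
    (hdeg : ∀ A : Finset V, r < #A → ∃ v ∈ A, β * #A ≤ #{u ∈ A | H.Adj v u}) (d : ℕ) :
    (#(H.indepSetFinset d) : ℝ) ≤
      exp (log (Fintype.card V + 1) ^ 2 / β + log (Fintype.card V + 1) + x * r) * x⁻¹ ^ d := by
  set L := log (Fintype.card V + 1 : ℝ)
  have hL : 0 ≤ L := log_nonneg (by simp)
  set q := ⌈L / β⌉₊
  have hq : (q : ℝ) ≤ L / β + 1 := (Nat.ceil_lt_add_one (by positivity)).le
  have h_shrink : (#(univ : Finset V) : ℝ) * (1 - β) ^ q ≤ r :=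
    calc (#(univ : Finset V) : ℝ) * (1 - β) ^ q ≤ (Fintype.card V + 1) * (1 - β) ^ q := by
          have : 0 ≤ 1 - β := by linarith
          rw [card_univ]
          gcongr
          linarith
      _ ≤ 1 := mul_one_sub_pow_ceil_le_one (by positivity) hβ₀ hβ₁
      _ ≤ r := hr
  have h_poly : #(H.indepSetFinset d) * x ^ d ≤ exp (L ^ 2 / β + L + x * r) :=
    calc #(H.indepSetFinset d) * x ^ d ≤ indepPoly H univ x :=
          card_indepSetFinset_mul_pow_le_indepPoly H hx₀.le d
      _ ≤ (Fintype.card V + 1) ^ q * exp (x * r) := by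
          simpa using indepPoly_le_of_exists_degree_ge hx₀.le hx₁ hdeg univ q h_shrink
      _ = exp (q * L + x * r) := by rw [exp_add, exp_nat_mul, exp_log (by positivity)]
      _ ≤ exp ((L / β + 1) * L + x * r) := by gcongr
      _ = exp (L ^ 2 / β + L + x * r) := by ring_nf
  rwa [inv_pow, ← div_eq_mul_inv, le_div_iff₀ (by positivity)]

variable {G : SimpleGraph V} {D : ℕ}

lemma le_sqrt_card_of_indepSetFinset_commonNeighborGraph_nonempty
    (hdeg : ∀ v, D ≤ G.degree v)
    (hF : ((commonNeighborGraph G).indepSetFinset (D + 1)).Nonempty) :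
    (D : ℝ) ≤ √(Fintype.card V) := by
  obtain ⟨W, hW⟩ := hF
  obtain ⟨hW_indep, hW_card⟩ := SimpleGraph.mem_indepSetFinset_iff.1 hW
  have h_packing := card_mul_le_card_of_isIndepSet_commonNeighborGraph hW_indep fun v _ => hdeg v
  rw [hW_card] at h_packing
  refine le_sqrt_of_sq_le ?_
  exact_mod_cast (by nlinarith : D ^ 2 ≤ Fintype.card V)

lemma C4Free.card_indepSetFinset_commonNeighborGraph_le_exp (hG : C4Free G) (hD : 1 ≤ D)
    (hdeg : ∀ v, D ≤ G.degree v) :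
    (#((commonNeighborGraph G).indepSetFinset (D + 1)) : ℝ) ≤
      exp (2 * Fintype.card V / D ^ 2 * log (Fintype.card V + 1) ^ 2 +
        log (Fintype.card V + 1) + 4 * √(Fintype.card V)) := by
  rcases ((commonNeighborGraph G).indepSetFinset (D + 1)).eq_empty_or_nonempty with hF | hF
  · rw [hF, card_empty, Nat.cast_zero]
    exact exp_nonneg _
  have hDs := le_sqrt_card_of_indepSetFinset_commonNeighborGraph_nonempty hdeg hF
  set n := (Fintype.card V : ℝ)
  have hD' : (1 : ℝ) ≤ D := by exact_mod_cast hD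
  have hs : 0 < √n := by linarith
  have hsn : √n ^ 2 = n := sq_sqrt (Nat.cast_nonneg _)
  have hn_pos : 0 < n := sqrt_pos.1 hs
  have h_count := card_indepSetFinset_le_of_exists_degree_ge (x := D / √n) (by positivity)
    ((div_le_one hs).2 hDs) (by positivity) (by rw [div_le_one (by positivity)]; nlinarith)
    (by rw [le_div_iff₀ (by positivity)]; nlinarith)
    (fun A hA => hG.exists_div_mul_card_le_card_filter_adj hD (fun v _ => hdeg v) hA) (D + 1)
  have h_exponent : D / √n * (2 * n / D) = 2 * √n := by
    field_simp
    linarith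
  rw [h_exponent, inv_div] at h_count
  refine h_count.trans ?_
  set L := log (n + 1)
  calc exp (L ^ 2 / (D ^ 2 / (2 * n)) + L + 2 * √n) * (√n / D) ^ (D + 1)
      ≤ exp (L ^ 2 / (D ^ 2 / (2 * n)) + L + 2 * √n) * exp (2 * √n) := by
        gcongr
        exact div_pow_succ_le_exp hs.le hD
    _ = exp (2 * n / D ^ 2 * L ^ 2 + L + 4 * √n) := by
        rw [← exp_add, div_div_eq_mul_div]
        ring_nf

lemma C4Free.card_indepSetFinset_commonNeighborGraph_le_exp_sqrt (hG : C4Free G) {d : ℕ}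
    (hdeg : ∀ v, d - 1 ≤ G.degree v) :
    (#((commonNeighborGraph G).indepSetFinset d) : ℝ) ≤ exp (774 * √(Fintype.card V)) := by
  set n := (Fintype.card V : ℝ)
  have hn : 0 ≤ n := Nat.cast_nonneg _
  have hs := sqrt_nonneg n
  have hL_le := log_add_one_le_two_mul_sqrt hn
  have hL_pow := log_add_one_pow_four_le_sqrt hn
  set L := log (n + 1)
  have hL : 0 ≤ L := log_nonneg (by linarith)
  rcases le_or_gt (((d - 1 : ℕ) : ℝ) * L) (√n) with h_sparse | h_dense
  · refine (card_indepSetFinset_le_exp_mul_log _ d).trans (exp_le_exp.2 ?_)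
    have hd : (d : ℝ) ≤ (d - 1 : ℕ) + 1 := by exact_mod_cast (by omega : d ≤ d - 1 + 1)
    calc d * L ≤ ((d - 1 : ℕ) + 1) * L := by gcongr
      _ ≤ 774 * √n := by linarith
  · have hD : 1 ≤ d - 1 := by
      by_contra! h
      rw [Nat.lt_one_iff.1 h, Nat.cast_zero, zero_mul] at h_dense
      exact h_dense.not_ge hs
    obtain ⟨D, rfl⟩ : ∃ D, d = D + 1 := ⟨d - 1, by omega⟩
    rw [Nat.add_sub_cancel] at hD hdeg h_dense
    refine (hG.card_indepSetFinset_commonNeighborGraph_le_exp hD hdeg).trans (exp_le_exp.2 ?_)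
    have hD' : (0 : ℝ) < D := by exact_mod_cast hD
    have h_ratio : n / D ^ 2 ≤ L ^ 2 := by
      rw [div_le_iff₀ (pow_pos hD' 2), ← mul_pow, ← sqrt_le_left (by positivity), mul_comm]
      exact h_dense.le
    calc 2 * n / D ^ 2 * L ^ 2 + L + 4 * √n = 2 * (n / D ^ 2) * L ^ 2 + L + 4 * √n := by ring
      _ ≤ 2 * L ^ 2 * L ^ 2 + L + 4 * √n := by gcongr
      _ = 2 * L ^ 4 + L + 4 * √n := by ring
      _ ≤ 774 * √n := by linarith

end Counting

theorem kleitman_winston_extension :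
    ∃ K : ℝ, 1 < K ∧
      ∀ (n d : ℕ) (G : SimpleGraph (Fin n)), C4Free G →
        (∀ v : Fin n, d - 1 ≤ G.degree v) →
        (((Finset.univ : Finset (Fin n)).powerset.filter
          (fun W => W.card = d ∧ ∀ a ∈ W, ∀ b ∈ W, a ≠ b →
            ∀ c : Fin n, ¬ (G.Adj a c ∧ G.Adj b c))).card : ℝ)
        ≤ 2 ^ (K * (n : ℝ) ^ ((1 : ℝ)/2)) := by
  have h_log : 0 < log 2 := log_pos one_lt_two
  refine ⟨774 / log 2, ?_, fun n d G hG hdeg => ?_⟩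
  · rw [one_lt_div h_log]
    linarith [log_two_lt_d9]
  have h_count := hG.card_indepSetFinset_commonNeighborGraph_le_exp_sqrt hdeg
  rw [Fintype.card_fin] at h_count
  refine (Nat.cast_le.2 <| card_le_card fun W hW => ?_).trans (h_count.trans_eq ?_)
  · obtain ⟨-, hW_card, hW_indep⟩ := mem_filter.1 hW
    exact SimpleGraph.mem_indepSetFinset_iff.2
      ⟨isIndepSet_commonNeighborGraph_iff.2 hW_indep, hW_card⟩
  · rw [← sqrt_eq_rpow, rpow_def_of_pos two_pos, ← mul_assoc, mul_div_cancel₀ _ h_log.ne']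
end

section
/- There exist constants c₁, c₂ > 0 such that for every integer n ≥ 3, c₁/log n ≤ ∏_{p prime, p < n}(1 − 1/p) ≤ c₂/log n, where log denotes the natural logarithm. -/
/-!
Let `P s n` be the product of `(1 - p⁻ˢ)⁻¹` over the primes `p < n`, so that the product to be
estimated is `1 / P 1 n`. Expanding the geometric series, `P s n` is the sum of `m⁻ˢ` over all
`m ≥ 1` whose prime factors are below `n`. This sum contains every `m < n`, so `P 1 n` is at least
a harmonic sum, hence at least `log n`. For the upper bound, `P (1 + δ) n ≤ ζ(1 + δ) ≤ 1 + δ⁻¹`,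
and passing from exponent `1 + δ` to exponent `1` costs a factor of at most
`exp (2 δ ∑ log p / p)`. Legendre's formula for `n!` together with Chebyshev's bound for `θ` gives
`∑ log p / p ≤ log n + log 4`, so the choice `δ = 1 / log n` keeps this factor bounded while
`1 + δ⁻¹ = 1 + log n`.
-/

open Finset Nat Real

section PartialEulerProduct

/-- The completely multiplicative function `m ↦ m⁻ˢ`, in the bundled form required by the Euler
product formula. -/
noncomputable def natRpowNegHom (s : ℝ) : ℕ →* ℝ where
  toFun m := (m : ℝ) ^ (-s)
  map_one' := by simp
  map_mul' a b := by rw [cast_mul, mul_rpow a.cast_nonneg b.cast_nonneg]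

/-- The Euler product of the Riemann zeta function at the real point `s`, restricted to the primes
strictly less than `n`. -/
noncomputable def partialEulerProduct (s : ℝ) (n : ℕ) : ℝ :=
  ∏ p ∈ n.primesBelow, (1 - (p : ℝ) ^ (-s))⁻¹

variable {s : ℝ}

lemma prime_rpow_neg_lt_one {p : ℕ} (hs : 0 < s) (hp : p.Prime) : (p : ℝ) ^ (-s) < 1 :=
  rpow_lt_one_of_one_lt_of_neg (mod_cast hp.one_lt) (neg_neg_of_pos hs)

lemma partialEulerProduct_pos (hs : 0 < s) (n : ℕ) : 0 < partialEulerProduct s n :=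
  prod_pos fun _ hp ↦
    inv_pos.mpr <| sub_pos.mpr <| prime_rpow_neg_lt_one hs (prime_of_mem_primesBelow hp)

lemma hasSum_smoothNumbers_rpow_neg (hs : 0 < s) (n : ℕ) :
    HasSum (fun m : n.smoothNumbers ↦ (m : ℝ) ^ (-s)) (partialEulerProduct s n) := by
  refine (EulerProduct.summable_and_hasSum_smoothNumbers_prod_primesBelow_geometric
    (f := natRpowNegHom s) (fun {p} hp ↦ ?_) n).2
  exact (norm_of_nonneg (rpow_nonneg p.cast_nonneg _)).trans_lt (prime_rpow_neg_lt_one hs hp)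

lemma sum_Ico_rpow_neg_le_partialEulerProduct (hs : 0 < s) (n : ℕ) :
    ∑ m ∈ Ico 1 n, (m : ℝ) ^ (-s) ≤ partialEulerProduct s n := by
  have h_smooth : ∀ m ∈ Ico 1 n, m ∈ n.smoothNumbers := fun m hm ↦
    mem_smoothNumbers_of_lt (mem_Ico.mp hm).1 (mem_Ico.mp hm).2
  rw [← sum_subtype_of_mem _ h_smooth]
  exact sum_le_hasSum _ (fun m _ ↦ rpow_nonneg m.1.cast_nonneg _)
    (hasSum_smoothNumbers_rpow_neg hs n)

lemma log_le_partialEulerProduct_one {n : ℕ} (hn : n ≠ 0) :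
    Real.log n ≤ partialEulerProduct 1 n := by
  obtain ⟨k, rfl⟩ := exists_eq_succ_of_ne_zero hn
  calc Real.log (k + 1 : ℕ) ≤ (harmonic k : ℝ) := log_add_one_le_harmonic k
    _ = ∑ m ∈ Ico 1 (k + 1), (m : ℝ) ^ (-1 : ℝ) := by
      simp [harmonic_eq_sum_Icc, rpow_neg_one, ← Ico_add_one_right_eq_Icc]
    _ ≤ partialEulerProduct 1 (k + 1) := sum_Ico_rpow_neg_le_partialEulerProduct one_pos _

lemma tsum_rpow_neg_le (hs : 1 < s) : ∑' m : ℕ, (m : ℝ) ^ (-s) ≤ 1 + (s - 1)⁻¹ := by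
  have h_shift : ∑' m : ℕ, (m : ℝ) ^ (-s) = ∑' m : ℕ, 1 / ((m : ℝ) + 1) ^ s := by
    rw [(summable_nat_rpow.mpr (neg_lt_neg hs)).tsum_eq_zero_add, cast_zero,
      zero_rpow (by linarith), zero_add]
    exact tsum_congr fun m ↦ by rw [rpow_neg (cast_nonneg _), cast_succ, one_div]
  have h_error : 0 ≤ s * ZetaAsymptotics.termTSum s :=
    mul_nonneg (by linarith) (tsum_nonneg fun _ ↦ ZetaAsymptotics.term_nonneg _ _)
  have h_zeta := ZetaAsymptotics.zeta_limit_aux1 hs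
  rw [h_shift, ← one_div]
  linarith

lemma partialEulerProduct_le_one_add_inv (hs : 1 < s) (n : ℕ) :
    partialEulerProduct s n ≤ 1 + (s - 1)⁻¹ :=
  calc partialEulerProduct s n = ∑' m : n.smoothNumbers, (m : ℝ) ^ (-s) :=
        (hasSum_smoothNumbers_rpow_neg (by linarith) n).tsum_eq.symm
    _ ≤ ∑' m : ℕ, (m : ℝ) ^ (-s) :=
        (summable_nat_rpow.mpr (neg_lt_neg hs)).tsum_subtype_le _ _
          fun m ↦ rpow_nonneg m.cast_nonneg _
    _ ≤ 1 + (s - 1)⁻¹ := tsum_rpow_neg_le hs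

end PartialEulerProduct

section ChangeOfExponent

lemma one_sub_mul_exp_neg_le {q x : ℝ} (hq₀ : 0 ≤ q) (hq : q ≤ 1 / 2) (hx : 0 ≤ x) :
    1 - q * exp (-x) ≤ (1 - q) * exp (2 * q * x) :=
  calc 1 - q * exp (-x) ≤ 1 - q * (1 - x) := by gcongr; exact one_sub_le_exp_neg x
    _ ≤ (1 - q) * (2 * q * x + 1) := by
      have : 0 ≤ q * x * (1 - 2 * q) := mul_nonneg (mul_nonneg hq₀ hx) (by linarith)
      linarith
    _ ≤ (1 - q) * exp (2 * q * x) :=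
      mul_le_mul_of_nonneg_left (add_one_le_exp _) (by linarith)

variable {s δ : ℝ}

lemma inv_one_sub_rpow_neg_le {p : ℝ} (hp : 2 ≤ p) (hs : 1 ≤ s) (hδ : 0 ≤ δ) :
    (1 - p ^ (-s))⁻¹ ≤ exp (2 * δ * (p ^ (-s) * Real.log p)) * (1 - p ^ (-(s + δ)))⁻¹ := by
  have hp₀ : 0 < p := by linarith
  have hq : p ^ (-s) ≤ 1 / 2 :=
    calc p ^ (-s) ≤ p ^ (-1 : ℝ) := rpow_le_rpow_of_exponent_le (by linarith) (by linarith)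
      _ = 1 / p := by rw [rpow_neg_one, one_div]
      _ ≤ 1 / 2 := by gcongr
  have h_shift : p ^ (-(s + δ)) = p ^ (-s) * exp (-(δ * Real.log p)) := by
    rw [neg_add, rpow_add hp₀, rpow_def_of_pos hp₀ (-δ), mul_neg, mul_comm δ]
  have h_pos : 0 < 1 - p ^ (-(s + δ)) :=
    sub_pos.mpr (rpow_lt_one_of_one_lt_of_neg (by linarith) (by linarith))
  have h_factor :
      1 - p ^ (-(s + δ)) ≤ (1 - p ^ (-s)) * exp (2 * δ * (p ^ (-s) * Real.log p)) := by
    rw [h_shift, show 2 * δ * (p ^ (-s) * Real.log p) = 2 * p ^ (-s) * (δ * Real.log p) by ring]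
    exact one_sub_mul_exp_neg_le (rpow_nonneg hp₀.le _) hq
      (mul_nonneg hδ (Real.log_nonneg (by linarith)))
  rwa [← div_eq_mul_inv, le_div_iff₀ h_pos, inv_mul_le_iff₀ (by linarith)]

lemma partialEulerProduct_le_exp_mul (hs : 1 ≤ s) (hδ : 0 ≤ δ) (n : ℕ) :
    partialEulerProduct s n ≤
      exp (2 * δ * ∑ p ∈ n.primesBelow, (p : ℝ) ^ (-s) * Real.log p) *
        partialEulerProduct (s + δ) n := by
  rw [mul_sum, exp_sum, partialEulerProduct, partialEulerProduct, ← prod_mul_distrib]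
  refine prod_le_prod (fun p hp ↦ ?_) fun p hp ↦ ?_
  all_goals have hp := prime_of_mem_primesBelow hp
  · exact inv_nonneg.mpr (sub_nonneg.mpr (prime_rpow_neg_lt_one (by linarith) hp).le)
  · exact inv_one_sub_rpow_neg_le (mod_cast hp.two_le) hs hδ

end ChangeOfExponent

section SumLogDiv

lemma div_le_factorization_factorial {p : ℕ} (hp : p.Prime) (n : ℕ) :
    n / p ≤ (n !).factorization p :=
  calc n / p ≤ (p * (n / p))!.factorization p := by
        rw [factorization_factorial_mul hp]; exact Nat.le_add_left _ _
    _ ≤ (n !).factorization p :=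
        (factorization_le_iff_dvd (factorial_ne_zero _) n.factorial_ne_zero).mpr
          (factorial_dvd_factorial (Nat.mul_div_le n p)) p

lemma sum_primesLE_div_mul_log_le_log_factorial (n : ℕ) :
    ∑ p ∈ n.primesLE, ((n / p : ℕ) : ℝ) * Real.log p ≤ Real.log n ! := by
  have h_support : n.primesLE ⊆ (n !).factorization.support := fun p hp ↦ by
    have hp' := prime_of_mem_primesLE hp
    rw [Nat.support_factorization, mem_primeFactors]
    exact ⟨hp', hp'.dvd_factorial.mpr (le_of_mem_primesLE hp), n.factorial_ne_zero⟩
  calc ∑ p ∈ n.primesLE, ((n / p : ℕ) : ℝ) * Real.log p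
      ≤ ∑ p ∈ n.primesLE, ((n !).factorization p : ℝ) * Real.log p := by
        gcongr with p hp
        exact div_le_factorization_factorial (prime_of_mem_primesLE hp) n
    _ ≤ ∑ p ∈ (n !).factorization.support, ((n !).factorization p : ℝ) * Real.log p :=
        sum_le_sum_of_subset_of_nonneg h_support fun p _ _ ↦ by positivity
    _ = Real.log n ! := (log_nat_eq_sum_factorization n !).symm

lemma log_factorial_le_mul_log (n : ℕ) : Real.log n ! ≤ n * Real.log n := by
  rw [← Real.log_pow]
  exact Real.log_le_log (mod_cast n.factorial_pos) (mod_cast n.factorial_le_pow)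

lemma sum_primesLE_log_div_le {n : ℕ} (hn : n ≠ 0) :
    ∑ p ∈ n.primesLE, Real.log p / p ≤ Real.log n + Real.log 4 := by
  have hn₀ : (0 : ℝ) < n := by positivity
  have h_div (p : ℕ) : (n : ℝ) / p ≤ ((n / p : ℕ) : ℝ) + 1 := by
    rw [← floor_div_eq_div (K := ℝ)]
    exact (lt_floor_add_one _).le
  refine le_of_mul_le_mul_left ?_ hn₀
  calc n * ∑ p ∈ n.primesLE, Real.log p / p
      = ∑ p ∈ n.primesLE, (n : ℝ) / p * Real.log p := by
        rw [mul_sum]; exact sum_congr rfl fun p _ ↦ by ring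
    _ ≤ ∑ p ∈ n.primesLE, (((n / p : ℕ) : ℝ) + 1) * Real.log p := by
        gcongr with p; exact h_div p
    _ = ∑ p ∈ n.primesLE, ((n / p : ℕ) : ℝ) * Real.log p + Chebyshev.theta n := by
        simp only [add_mul, one_mul, sum_add_distrib, Chebyshev.theta_eq_sum_primesLE_log]
    _ ≤ n * Real.log n + Real.log 4 * n :=
        add_le_add
          ((sum_primesLE_div_mul_log_le_log_factorial n).trans (log_factorial_le_mul_log n))
          (Chebyshev.theta_le_log4_mul_x hn₀.le)
    _ = n * (Real.log n + Real.log 4) := by ring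

lemma sum_primesBelow_rpow_neg_one_mul_log_le {n : ℕ} (hn : n ≠ 0) :
    ∑ p ∈ n.primesBelow, (p : ℝ) ^ (-1 : ℝ) * Real.log p ≤ Real.log n + Real.log 4 :=
  calc ∑ p ∈ n.primesBelow, (p : ℝ) ^ (-1 : ℝ) * Real.log p
      = ∑ p ∈ n.primesBelow, Real.log p / p :=
        sum_congr rfl fun p _ ↦ by rw [rpow_neg_one, inv_mul_eq_div]
    _ ≤ ∑ p ∈ n.primesLE, Real.log p / p :=
        sum_le_sum_of_subset_of_nonneg (primesBelow_mono n.le_succ) fun p _ _ ↦ by positivity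
    _ ≤ Real.log n + Real.log 4 := sum_primesLE_log_div_le hn

end SumLogDiv

lemma partialEulerProduct_one_le_exp_mul {n : ℕ} {δ : ℝ} (hn : n ≠ 0) (hδ : 0 < δ) :
    partialEulerProduct 1 n ≤ exp (2 * δ * (Real.log n + Real.log 4)) * (1 + δ⁻¹) :=
  calc partialEulerProduct 1 n
      ≤ exp (2 * δ * ∑ p ∈ n.primesBelow, (p : ℝ) ^ (-1 : ℝ) * Real.log p) *
          partialEulerProduct (1 + δ) n := partialEulerProduct_le_exp_mul le_rfl hδ.le n
    _ ≤ exp (2 * δ * (Real.log n + Real.log 4)) * (1 + δ⁻¹) := by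
      gcongr
      · exact (partialEulerProduct_pos (by linarith) n).le
      · exact sum_primesBelow_rpow_neg_one_mul_log_le hn
      · simpa using partialEulerProduct_le_one_add_inv (lt_add_of_pos_right 1 hδ) n

lemma partialEulerProduct_one_le_mul_log {n : ℕ} (hn : 3 ≤ n) :
    partialEulerProduct 1 n ≤ 2 * exp (2 + 2 * Real.log 4) * Real.log n := by
  have h_log : 1 ≤ Real.log n := by
    have hn' : (3 : ℝ) ≤ n := mod_cast hn
    rw [le_log_iff_exp_le (by linarith)]
    exact exp_one_lt_three.le.trans hn'
  have h_log_pos : 0 < Real.log n := by linarith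
  have h_exponent : 2 * (Real.log n)⁻¹ * (Real.log n + Real.log 4) ≤ 2 + 2 * Real.log 4 := by
    have h_inv : (Real.log n)⁻¹ * Real.log 4 ≤ Real.log 4 :=
      mul_le_of_le_one_left (by positivity) (inv_le_one_of_one_le₀ h_log)
    linarith [inv_mul_cancel₀ h_log_pos.ne']
  calc partialEulerProduct 1 n
      ≤ exp (2 * (Real.log n)⁻¹ * (Real.log n + Real.log 4)) * (1 + (Real.log n)⁻¹⁻¹) :=
        partialEulerProduct_one_le_exp_mul (by lia) (inv_pos.mpr h_log_pos)
    _ ≤ exp (2 + 2 * Real.log 4) * (2 * Real.log n) := by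
        rw [inv_inv]
        gcongr
        linarith
    _ = 2 * exp (2 + 2 * Real.log 4) * Real.log n := by ring

lemma prod_primesBelow_one_sub_one_div (n : ℕ) :
    ∏ p ∈ n.primesBelow, (1 - 1 / (p : ℝ)) = (partialEulerProduct 1 n)⁻¹ := by
  simp only [partialEulerProduct, rpow_neg_one, prod_inv_distrib, inv_inv, one_div]

theorem mertens_estimate :
    ∃ c₁ c₂ : ℝ, 0 < c₁ ∧ 0 < c₂ ∧ ∀ n : ℕ, 3 ≤ n →
      c₁ / Real.log n ≤ ∏ p ∈ (Finset.range n).filter Nat.Prime, (1 - 1 / (p : ℝ)) ∧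
      ∏ p ∈ (Finset.range n).filter Nat.Prime, (1 - 1 / (p : ℝ)) ≤ c₂ / Real.log n := by
  refine ⟨(2 * exp (2 + 2 * Real.log 4))⁻¹, 1, by positivity, one_pos, fun n hn ↦ ?_⟩
  have h_log_pos : 0 < Real.log n := Real.log_pos (mod_cast (by lia : 1 < n))
  rw [← primesBelow, prod_primesBelow_one_sub_one_div, one_div, div_eq_mul_inv, ← mul_inv]
  exact ⟨inv_anti₀ (partialEulerProduct_pos one_pos n) (partialEulerProduct_one_le_mul_log hn),
    inv_anti₀ h_log_pos (log_le_partialEulerProduct_one (by lia))⟩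
end
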